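/- Let λ > 0 and let φ ∈ P^r satisfy φ' − λ φ − L̂(φ(t₁)) = L(1) on I. Then the L²(I)-norm of φ satisfies (∫_I φ(t)² dt)^{1/2} ≤ Υ(r, kλ) · k^{1/2}, where Υ(r, ϱ) = √(3/(2(2r+1)+ϱ)). In particular, the L²(I)-norm of φ tends to 0 as r → ∞, uniformly with respect to λ. -/

import Mathlib

open Polynomial MeasureTheory intervalIntegral

/-- The rescaled Legendre polynomials on `[t₀, t₁]`: `K i` has degree `i`,
`K i (t₁) = 1`, `K i (t₀) = (-1)^i`, and they are `L²(t₀,t₁)`-orthogonal with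
`∫ K i ^ 2 = (t₁ - t₀)/(2 i + 1)`. -/
def IsLegendreBasis (t₀ t₁ : ℝ) (K : ℕ → Polynomial ℝ) : Prop :=
  (∀ i, (K i).natDegree = i) ∧ (∀ i, (K i).eval t₁ = 1) ∧
  (∀ i, (K i).eval t₀ = (-1 : ℝ) ^ i) ∧
  (∀ i j, (∫ t in t₀..t₁, (K i).eval t * (K j).eval t) =
    if i = j then (t₁ - t₀) / (2 * (i : ℝ) + 1) else 0)

/-- The lifting operator `L(z) = (z/k) ∑_{i=0}^r (-1)^i (2i+1) K_i`. -/
noncomputable def Lop (t₀ t₁ : ℝ) (r : ℕ) (K : ℕ → Polynomial ℝ) (z : ℝ) : Polynomial ℝ :=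
  Polynomial.C (z / (t₁ - t₀)) *
    ∑ i ∈ Finset.range (r + 1), Polynomial.C ((-1 : ℝ) ^ i * (2 * (i : ℝ) + 1)) * K i

/-- The endpoint lifting operator `L̂(z) = (z/k) ∑_{i=0}^r (2i+1) K_i`. -/
noncomputable def LopE (t₀ t₁ : ℝ) (r : ℕ) (K : ℕ → Polynomial ℝ) (z : ℝ) : Polynomial ℝ :=
  Polynomial.C (z / (t₁ - t₀)) *
    ∑ i ∈ Finset.range (r + 1), Polynomial.C (2 * (i : ℝ) + 1) * K i

/-- The scalar dG operator `Γ_λ(v) = v' + L(v(t₀)) + λ v`. -/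
noncomputable def Gam (t₀ t₁ : ℝ) (r : ℕ) (K : ℕ → Polynomial ℝ) (lam : ℝ)
    (v : Polynomial ℝ) : Polynomial ℝ :=
  Polynomial.derivative v + Lop t₀ t₁ r K (v.eval t₀) + Polynomial.C lam * v

/-- `Υ(r, ϱ) = √(3 / (2 (2 r + 1) + ϱ))`. -/
noncomputable def Upsilon (r : ℕ) (ρ : ℝ) : ℝ :=
  Real.sqrt (3 / (2 * (2 * (r : ℝ) + 1) + ρ))

/-!
Testing the equation with `φ` gives `λ ‖φ‖² = (1 - φ(t₁)² - (1 + φ(t₀))²) / 2`, and testing it with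
`K r`, which is orthogonal to `φ'`, gives `λ u = 1 + (-1)^r φ(t₁)` for `u = -(-1)^r ∫ φ K_r`.
Since `1 - x² ≤ 2 (1 + x)`, this shows `‖φ‖² ≤ u`. To bound `u`, integrate the equation by parts:
the Legendre moments `m_n = ∫ φ K_n` then satisfy
`λ m_{n+1} + (2 (2 n + 1) / k) m_n = λ m_{n-1}` with `m_{-1} = -m_0`, so consecutive moments have
opposite signs, and `(2 (2 r + 1) / k + λ) m_r = λ m_{r-1} - 2 (-1)^r` yields
`(2 (2 r + 1) / k + λ) u ≤ 2`. This gives the bound with `2` in place of the `3` in `Υ`.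
-/

section DegreeLT

variable {R : Type*}

theorem derivative_mem_degreeLT [Semiring R] {n : ℕ} {p : R[X]}
    (hp : p ∈ degreeLT R (n + 1)) : derivative p ∈ degreeLT R n := by
  rw [mem_degreeLT, degree_lt_iff_coeff_zero] at hp ⊢
  intro m hm
  rw [coeff_derivative, hp (m + 1) (by lia), zero_mul]

theorem mem_degreeLT_succ_of_natDegree_le [Semiring R] {n : ℕ} {p : R[X]}
    (hp : p.natDegree ≤ n) : p ∈ degreeLT R (n + 1) := by
  rw [degreeLT_succ_eq_degreeLE, mem_degreeLE]
  exact degree_le_of_natDegree_le hp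

theorem eqOn_degreeLT_of_sequence {M : Type*} [Ring R] [AddCommGroup M] [Module R M]
    (S : Polynomial.Sequence R) {n : ℕ} (hS : ∀ i < n, IsUnit (S i).leadingCoeff)
    {F G : R[X] →ₗ[R] M} (h : ∀ i < n, F (S i) = G (S i)) : Set.EqOn F G (degreeLT R n) := by
  rw [← S.span_degreeLT hS]
  exact LinearMap.eqOn_span' (Set.forall_mem_image.2 h)

end DegreeLT

theorem intervalIntegrable_eval_mul_eval (a b : ℝ) (p q : ℝ[X]) :
    IntervalIntegrable (fun t => p.eval t * q.eval t) volume a b :=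
  (p.continuous.mul q.continuous).intervalIntegrable a b

/-- The `L²(a, b)` inner product `∫ p q` of real polynomials, as a bilinear form. -/
noncomputable def polyInner (a b : ℝ) : LinearMap.BilinForm ℝ ℝ[X] :=
  LinearMap.mk₂ ℝ (fun p q => ∫ t in a..b, p.eval t * q.eval t)
    (fun p p' q => by
      simp only [eval_add, add_mul]
      exact integral_add (intervalIntegrable_eval_mul_eval a b p q)
        (intervalIntegrable_eval_mul_eval a b p' q))
    (fun c p q => by
      simp only [eval_smul, smul_eq_mul, mul_assoc, intervalIntegral.integral_const_mul])
    (fun p q q' => by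
      simp only [eval_add, mul_add]
      exact integral_add (intervalIntegrable_eval_mul_eval a b p q)
        (intervalIntegrable_eval_mul_eval a b p q'))
    (fun c p q => by
      simp only [eval_smul, smul_eq_mul, mul_left_comm, intervalIntegral.integral_const_mul])

theorem polyInner_apply (a b : ℝ) (p q : ℝ[X]) :
    polyInner a b p q = ∫ t in a..b, p.eval t * q.eval t := rfl

theorem polyInner_comm (a b : ℝ) (p q : ℝ[X]) : polyInner a b p q = polyInner a b q p := by
  simp only [polyInner_apply, mul_comm]

theorem polyInner_C_mul_left (a b c : ℝ) (p q : ℝ[X]) :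
    polyInner a b (C c * p) q = c * polyInner a b p q := by
  rw [← smul_eq_C_mul, map_smul, LinearMap.smul_apply, smul_eq_mul]

theorem polyInner_C_mul_right (a b c : ℝ) (p q : ℝ[X]) :
    polyInner a b p (C c * q) = c * polyInner a b p q := by
  rw [← smul_eq_C_mul, map_smul, smul_eq_mul]

theorem polyInner_derivative_add (a b : ℝ) (p q : ℝ[X]) :
    polyInner a b (derivative p) q + polyInner a b p (derivative q) =
      p.eval b * q.eval b - p.eval a * q.eval a := by
  rw [polyInner_apply, polyInner_apply, ← intervalIntegral.integral_add
    (intervalIntegrable_eval_mul_eval a b (derivative p) q)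
    (intervalIntegrable_eval_mul_eval a b p (derivative q))]
  exact integral_deriv_mul_eq_sub (fun t _ => p.hasDerivAt t) (fun t _ => q.hasDerivAt t)
    ((derivative p).continuous.intervalIntegrable a b)
    ((derivative q).continuous.intervalIntegrable a b)

/-- The Legendre polynomial `K_{n-1}`, with the convention `K_{-1} = -K_0`: this is the choice for
which `K_{n-1}(t₀) = -(-1)^n` and `K_{n+1}' = (2 (2 n + 1) / k) K_n + K_{n-1}'` also hold when
`n = 0`. -/
noncomputable def legendrePred (K : ℕ → ℝ[X]) : ℕ → ℝ[X]
  | 0 => -K 0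
  | n + 1 => K n

namespace IsLegendreBasis

variable {t₀ t₁ : ℝ} {K : ℕ → ℝ[X]}

theorem natDegree_eq (hK : IsLegendreBasis t₀ t₁ K) (n : ℕ) : (K n).natDegree = n := hK.1 n

theorem eval_right (hK : IsLegendreBasis t₀ t₁ K) (n : ℕ) : (K n).eval t₁ = 1 := hK.2.1 n

theorem eval_left (hK : IsLegendreBasis t₀ t₁ K) (n : ℕ) : (K n).eval t₀ = (-1) ^ n :=
  hK.2.2.1 n

theorem polyInner_eq_ite (hK : IsLegendreBasis t₀ t₁ K) (i j : ℕ) :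
    polyInner t₀ t₁ (K i) (K j) = if i = j then (t₁ - t₀) / (2 * (i : ℝ) + 1) else 0 :=
  hK.2.2.2 i j

theorem sub_ne_zero (hK : IsLegendreBasis t₀ t₁ K) : t₁ - t₀ ≠ 0 := by
  intro h
  have h1 := hK.eval_right 1
  rw [sub_eq_zero.1 h, hK.eval_left 1] at h1
  norm_num at h1

/-- The Legendre polynomials, bundled as a sequence of polynomials of successive degrees. -/
def sequence (hK : IsLegendreBasis t₀ t₁ K) : Polynomial.Sequence ℝ where
  elems' := K
  degree_eq' n := by
    have hne : K n ≠ 0 := fun h => by simpa [h] using hK.eval_right n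
    rw [degree_eq_natDegree hne, hK.natDegree_eq]

theorem mem_degreeLT (hK : IsLegendreBasis t₀ t₁ K) {m n : ℕ} (h : m < n) :
    K m ∈ degreeLT ℝ n :=
  Polynomial.mem_degreeLT.2 (by rw [show (K m).degree = m from hK.sequence.degree_eq m]; simpa)

theorem eq_sum_polyInner (hK : IsLegendreBasis t₀ t₁ K) {n : ℕ} {p : ℝ[X]}
    (hp : p ∈ degreeLT ℝ n) :
    p = ∑ i ∈ Finset.range n,
      C ((2 * (i : ℝ) + 1) / (t₁ - t₀) * polyInner t₀ t₁ p (K i)) * K i := by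
  let projection : ℝ[X] →ₗ[ℝ] ℝ[X] := ∑ i ∈ Finset.range n,
    ((2 * (i : ℝ) + 1) / (t₁ - t₀)) • ((polyInner t₀ t₁).flip (K i)).smulRight (K i)
  have hproj (q : ℝ[X]) : projection q = ∑ i ∈ Finset.range n,
      C ((2 * (i : ℝ) + 1) / (t₁ - t₀) * polyInner t₀ t₁ q (K i)) * K i := by
    simp [projection, smul_eq_C_mul, mul_assoc]
  rw [← hproj]
  refine eqOn_degreeLT_of_sequence (F := LinearMap.id) (G := projection) hK.sequence
    (fun i _ => (leadingCoeff_ne_zero.2 (hK.sequence.ne_zero i)).isUnit) (fun j hj => ?_) hp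
  change K j = projection (K j)
  have hk := hK.sub_ne_zero
  have hj' : 2 * (j : ℝ) + 1 ≠ 0 := by positivity
  rw [hproj, Finset.sum_eq_single_of_mem j (Finset.mem_range.2 hj), hK.polyInner_eq_ite, if_pos rfl,
    div_mul_div_cancel₀ hk, div_self hj', C_1, one_mul]
  intro i _ hij
  rw [hK.polyInner_eq_ite, if_neg hij.symm, mul_zero, C_0, zero_mul]

theorem polyInner_eq_zero (hK : IsLegendreBasis t₀ t₁ K) {n : ℕ} {p : ℝ[X]}
    (hp : p ∈ degreeLT ℝ n) : polyInner t₀ t₁ p (K n) = 0 := by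
  rw [hK.eq_sum_polyInner hp, map_sum, LinearMap.sum_apply]
  refine Finset.sum_eq_zero fun i hi => ?_
  rw [polyInner_C_mul_left, hK.polyInner_eq_ite, if_neg (Finset.mem_range.1 hi).ne, mul_zero]

theorem eq_C_mul_of_orthogonal (hK : IsLegendreBasis t₀ t₁ K) {n : ℕ} {p : ℝ[X]}
    (hp : p ∈ degreeLT ℝ (n + 1)) (h : ∀ j < n, polyInner t₀ t₁ p (K j) = 0) :
    p = C ((2 * (n : ℝ) + 1) / (t₁ - t₀) * polyInner t₀ t₁ p (K n)) * K n := by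
  conv_lhs => rw [hK.eq_sum_polyInner hp]
  rw [Finset.sum_range_succ, Finset.sum_eq_zero, zero_add]
  intro j hj
  rw [h j (Finset.mem_range.1 hj), mul_zero, C_0, zero_mul]

/-- The combination `∑ (2i+1)/k K_i(x) K_i` is the reproducing kernel of `P^r` at `x`. Both lifting
operators are multiples of it, at `x = t₀` and at `x = t₁`. -/
theorem polyInner_reproducingKernel (hK : IsLegendreBasis t₀ t₁ K) {n : ℕ} (x : ℝ) {V : ℝ[X]}
    (hV : V ∈ degreeLT ℝ n) :
    polyInner t₀ t₁
      (∑ i ∈ Finset.range n, C ((2 * (i : ℝ) + 1) / (t₁ - t₀) * (K i).eval x) * K i) V =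
      V.eval x := by
  conv_rhs => rw [hK.eq_sum_polyInner hV]
  rw [map_sum, LinearMap.sum_apply, eval_finsetSum]
  refine Finset.sum_congr rfl fun i _ => ?_
  rw [polyInner_C_mul_left, polyInner_comm t₀ t₁ (K i), eval_mul, eval_C]
  ring

theorem polyInner_Lop (hK : IsLegendreBasis t₀ t₁ K) {r : ℕ} (z : ℝ) {V : ℝ[X]}
    (hV : V ∈ degreeLT ℝ (r + 1)) :
    polyInner t₀ t₁ (Lop t₀ t₁ r K z) V = z * V.eval t₀ := by
  rw [← hK.polyInner_reproducingKernel t₀ hV, ← polyInner_C_mul_left, Lop, Finset.mul_sum,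
    Finset.mul_sum]
  simp only [hK.eval_left, ← mul_assoc, ← C_mul]
  congr! 5
  ring

theorem polyInner_LopE (hK : IsLegendreBasis t₀ t₁ K) {r : ℕ} (z : ℝ) {V : ℝ[X]}
    (hV : V ∈ degreeLT ℝ (r + 1)) :
    polyInner t₀ t₁ (LopE t₀ t₁ r K z) V = z * V.eval t₁ := by
  rw [← hK.polyInner_reproducingKernel t₁ hV, ← polyInner_C_mul_left, LopE, Finset.mul_sum,
    Finset.mul_sum]
  simp only [hK.eval_right, ← mul_assoc, ← C_mul]
  congr! 5
  ring

theorem polyInner_derivative (hK : IsLegendreBasis t₀ t₁ K) {n : ℕ} {q : ℝ[X]}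
    (hq : q ∈ degreeLT ℝ (n + 1)) :
    polyInner t₀ t₁ (derivative (K n)) q = q.eval t₁ - (-1) ^ n * q.eval t₀ := by
  have orthogonal : polyInner t₀ t₁ (K n) (derivative q) = 0 := by
    rw [polyInner_comm, hK.polyInner_eq_zero (derivative_mem_degreeLT hq)]
  have parts := polyInner_derivative_add t₀ t₁ (K n) q
  rwa [orthogonal, add_zero, hK.eval_right, hK.eval_left, one_mul] at parts

theorem legendrePred_mem_degreeLT (hK : IsLegendreBasis t₀ t₁ K) (n : ℕ) :
    legendrePred K n ∈ degreeLT ℝ (n + 1) := by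
  cases n with
  | zero => exact neg_mem (hK.mem_degreeLT one_pos)
  | succ n => exact hK.mem_degreeLT (by lia)

theorem eval_left_legendrePred (hK : IsLegendreBasis t₀ t₁ K) (n : ℕ) :
    (legendrePred K n).eval t₀ = -(-1) ^ n := by
  cases n with
  | zero => simp [legendrePred, hK.eval_left]
  | succ n => simp [legendrePred, hK.eval_left, pow_succ]

theorem polyInner_derivative_legendrePred (hK : IsLegendreBasis t₀ t₁ K) {n j : ℕ} (hj : j < n) :
    polyInner t₀ t₁ (derivative (legendrePred K n)) (K j) = 1 + (-1) ^ (n + j) := by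
  obtain ⟨n, rfl⟩ := Nat.exists_eq_succ_of_ne_zero (Nat.ne_zero_of_lt hj)
  rw [legendrePred, hK.polyInner_derivative (hK.mem_degreeLT hj), hK.eval_left, hK.eval_right,
    Nat.succ_eq_add_one]
  ring

theorem derivative_succ (hK : IsLegendreBasis t₀ t₁ K) (n : ℕ) :
    derivative (K (n + 1)) =
      C (2 * (2 * (n : ℝ) + 1) / (t₁ - t₀)) * K n + derivative (legendrePred K n) := by
  have succ_inner {j : ℕ} (hj : j ≤ n) :
      polyInner t₀ t₁ (derivative (K (n + 1))) (K j) = 1 + (-1) ^ (n + j) := by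
    rw [hK.polyInner_derivative (hK.mem_degreeLT (by lia)), hK.eval_left, hK.eval_right]
    ring
  have pred_mem : derivative (legendrePred K n) ∈ degreeLT ℝ n :=
    derivative_mem_degreeLT (hK.legendrePred_mem_degreeLT n)
  have difference := hK.eq_C_mul_of_orthogonal (n := n)
    (p := derivative (K (n + 1)) - derivative (legendrePred K n))
    (sub_mem (derivative_mem_degreeLT (hK.mem_degreeLT (by lia)))
      (degreeLT_mono n.le_succ pred_mem))
    (fun j hj => by
      rw [map_sub, LinearMap.sub_apply, succ_inner hj.le,
        hK.polyInner_derivative_legendrePred hj, sub_self])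
  rw [map_sub, LinearMap.sub_apply, succ_inner le_rfl, hK.polyInner_eq_zero pred_mem,
    Even.neg_one_pow ⟨n, rfl⟩] at difference
  rw [← sub_eq_iff_eq_add, difference]
  congr 2
  ring

end IsLegendreBasis

/-- The variational form of the dual discontinuous Galerkin problem on `(a, b]`: `φ ∈ P^r` satisfies
`∫ φ' V - λ ∫ φ V - φ(b) V(b) = V(a)` for all `V ∈ P^r`, where `P^r` is encoded as
`degreeLT ℝ (r + 1)`. -/
structure IsDualSolution (a b lam : ℝ) (r : ℕ) (φ : ℝ[X]) : Prop where
  mem_degreeLT : φ ∈ degreeLT ℝ (r + 1)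
  inner_derivative_left : ∀ V ∈ degreeLT ℝ (r + 1),
    polyInner a b (derivative φ) V =
      lam * polyInner a b φ V + φ.eval b * V.eval b + V.eval a

theorem IsLegendreBasis.isDualSolution {t₀ t₁ lam : ℝ} {r : ℕ} {K : ℕ → ℝ[X]} {φ : ℝ[X]}
    (hK : IsLegendreBasis t₀ t₁ K) (hφdeg : φ.natDegree ≤ r)
    (hφ : derivative φ - C lam * φ - LopE t₀ t₁ r K (φ.eval t₁) = Lop t₀ t₁ r K 1) :
    IsDualSolution t₀ t₁ lam r φ where
  mem_degreeLT := mem_degreeLT_succ_of_natDegree_le hφdeg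
  inner_derivative_left V hV := by
    have tested := hK.polyInner_Lop 1 hV
    rw [← hφ, map_sub, map_sub, LinearMap.sub_apply, LinearMap.sub_apply, polyInner_C_mul_left,
      hK.polyInner_LopE _ hV] at tested
    linear_combination tested

namespace IsDualSolution

variable {a b lam : ℝ} {r : ℕ} {K : ℕ → ℝ[X]} {φ : ℝ[X]}

theorem inner_derivative_right (hφ : IsDualSolution a b lam r φ) {V : ℝ[X]}
    (hV : V ∈ degreeLT ℝ (r + 1)) :
    polyInner a b φ (derivative V) = -lam * polyInner a b φ V - (1 + φ.eval a) * V.eval a := by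
  linear_combination polyInner_derivative_add a b φ V - hφ.inner_derivative_left V hV

theorem energy_identity (hφ : IsDualSolution a b lam r φ) :
    lam * polyInner a b φ φ = (1 - φ.eval b ^ 2 - (1 + φ.eval a) ^ 2) / 2 := by
  have parts := polyInner_derivative_add a b φ φ
  rw [polyInner_comm a b φ (derivative φ)] at parts
  linear_combination parts / 2 - hφ.inner_derivative_left φ hφ.mem_degreeLT

theorem lam_mul_leading_moment (hφ : IsDualSolution a b lam r φ) (hK : IsLegendreBasis a b K) :
    lam * polyInner a b φ (K r) = -(φ.eval b + (-1) ^ r) := by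
  have tested := hφ.inner_derivative_left (K r) (hK.mem_degreeLT r.lt_succ_self)
  rw [hK.polyInner_eq_zero (derivative_mem_degreeLT hφ.mem_degreeLT), hK.eval_right,
    hK.eval_left] at tested
  linear_combination -tested

theorem inner_self_le_leading_moment (hφ : IsDualSolution a b lam r φ)
    (hK : IsLegendreBasis a b K) (hlam : 0 < lam) :
    polyInner a b φ φ ≤ -(-1) ^ r * polyInner a b φ (K r) := by
  refine le_of_mul_le_mul_left ?_ hlam
  have sign_sq : ((-1 : ℝ) ^ r) ^ 2 = 1 := by rw [pow_right_comm, neg_one_sq, one_pow]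
  calc lam * polyInner a b φ φ
      = (1 - ((-1) ^ r * φ.eval b) ^ 2 - (1 + φ.eval a) ^ 2) / 2 := by
        rw [hφ.energy_identity, mul_pow, sign_sq, one_mul]
    _ ≤ 1 + (-1) ^ r * φ.eval b := by
        linarith [sq_nonneg (1 + φ.eval a), sq_nonneg (1 + (-1) ^ r * φ.eval b)]
    _ = lam * (-(-1) ^ r * polyInner a b φ (K r)) := by
        linear_combination (-1) ^ r * hφ.lam_mul_leading_moment hK - sign_sq

theorem moment_recurrence (hφ : IsDualSolution a b lam r φ) (hK : IsLegendreBasis a b K) {n : ℕ}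
    (hn : n < r) :
    lam * polyInner a b φ (K (n + 1)) + 2 * (2 * (n : ℝ) + 1) / (b - a) * polyInner a b φ (K n) =
      lam * polyInner a b φ (legendrePred K n) := by
  have succ := hφ.inner_derivative_right (hK.mem_degreeLT (m := n + 1) (by lia))
  have pred := hφ.inner_derivative_right
    (degreeLT_mono (by lia) (hK.legendrePred_mem_degreeLT n))
  rw [hK.derivative_succ, map_add, polyInner_C_mul_right, hK.eval_left] at succ
  rw [hK.eval_left_legendrePred] at pred
  linear_combination succ - pred

theorem top_moment_recurrence (hφ : IsDualSolution a b lam r φ) (hK : IsLegendreBasis a b K) :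
    (2 * (2 * (r : ℝ) + 1) / (b - a) + lam) * polyInner a b φ (K r) =
      lam * polyInner a b φ (legendrePred K r) - 2 * (-1) ^ r := by
  have parts := polyInner_derivative_add a b φ (K (r + 1))
  have pred := hφ.inner_derivative_right (hK.legendrePred_mem_degreeLT r)
  rw [hK.polyInner_eq_zero (degreeLT_mono (by lia) (derivative_mem_degreeLT hφ.mem_degreeLT)),
    hK.derivative_succ, map_add, polyInner_C_mul_right, hK.eval_left, hK.eval_right] at parts
  rw [hK.eval_left_legendrePred] at pred
  linear_combination parts - pred + hφ.lam_mul_leading_moment hK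

theorem pred_moment_mul_moment_nonpos (hφ : IsDualSolution a b lam r φ)
    (hK : IsLegendreBasis a b K) (hab : a < b) (hlam : 0 < lam) {n : ℕ} (hn : n ≤ r) :
    polyInner a b φ (legendrePred K n) * polyInner a b φ (K n) ≤ 0 := by
  induction n with
  | zero =>
    rw [legendrePred, map_neg, neg_mul]
    exact neg_nonpos.2 (mul_self_nonneg _)
  | succ n ih =>
    have := sub_pos.2 hab
    refine nonpos_of_mul_nonpos_right ?_ hlam
    calc lam * (polyInner a b φ (K n) * polyInner a b φ (K (n + 1)))
        = lam * (polyInner a b φ (legendrePred K n) * polyInner a b φ (K n)) -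
            2 * (2 * (n : ℝ) + 1) / (b - a) * polyInner a b φ (K n) ^ 2 := by
          linear_combination polyInner a b φ (K n) * hφ.moment_recurrence hK hn
      _ ≤ 0 := sub_nonpos.2 <|
          (mul_nonpos_of_nonneg_of_nonpos hlam.le (ih (by lia))).trans (by positivity)

theorem leading_moment_le (hφ : IsDualSolution a b lam r φ) (hK : IsLegendreBasis a b K)
    (hab : a < b) (hlam : 0 < lam) :
    (2 * (2 * (r : ℝ) + 1) / (b - a) + lam) * (-(-1) ^ r * polyInner a b φ (K r)) ≤ 2 := by
  have := sub_pos.2 hab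
  have sign_sq : ((-1 : ℝ) ^ r) ^ 2 = 1 := by rw [pow_right_comm, neg_one_sq, one_pow]
  set u := -(-1) ^ r * polyInner a b φ (K r) with hu
  have quadratic : (2 * (2 * (r : ℝ) + 1) / (b - a) + lam) * u * u ≤ 2 * u := by
    have opposite := mul_nonpos_of_nonneg_of_nonpos hlam.le
      (hφ.pred_moment_mul_moment_nonpos hK hab hlam le_rfl)
    calc (2 * (2 * (r : ℝ) + 1) / (b - a) + lam) * u * u
        = lam * (polyInner a b φ (legendrePred K r) * polyInner a b φ (K r)) + 2 * u := by
          rw [hu]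
          linear_combination polyInner a b φ (K r) * hφ.top_moment_recurrence hK +
            (2 * (2 * (r : ℝ) + 1) / (b - a) + lam) * polyInner a b φ (K r) ^ 2 * sign_sq
      _ ≤ 2 * u := by linarith
  rcases le_or_gt u 0 with hu0 | hu0
  · exact (mul_nonpos_of_nonneg_of_nonpos (by positivity) hu0).trans zero_le_two
  · exact le_of_mul_le_mul_right quadratic hu0

theorem inner_self_le (hφ : IsDualSolution a b lam r φ) (hK : IsLegendreBasis a b K)
    (hab : a < b) (hlam : 0 < lam) :
    polyInner a b φ φ ≤ 2 / (2 * (2 * (r : ℝ) + 1) + (b - a) * lam) * (b - a) := by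
  have := sub_pos.2 hab
  calc polyInner a b φ φ
      ≤ -(-1) ^ r * polyInner a b φ (K r) := hφ.inner_self_le_leading_moment hK hlam
    _ ≤ 2 / (2 * (2 * (r : ℝ) + 1) / (b - a) + lam) :=
        (le_div_iff₀' (by positivity)).2 (hφ.leading_moment_le hK hab hlam)
    _ = 2 / (2 * (2 * (r : ℝ) + 1) + (b - a) * lam) * (b - a) := by field_simp

end IsDualSolution

/-- The `L²(I)`-bound `‖φ‖_{L²(I)} ≤ Υ(r, kλ) k^{1/2}` for the dG dual solution. -/
theorem stmt_8 (t₀ t₁ : ℝ) (ht : t₀ < t₁) (r : ℕ) (K : ℕ → Polynomial ℝ)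
    (hK : IsLegendreBasis t₀ t₁ K) (lam : ℝ) (hlam : 0 < lam)
    (φ : Polynomial ℝ) (hφdeg : φ.natDegree ≤ r)
    (hφ : Polynomial.derivative φ - Polynomial.C lam * φ - LopE t₀ t₁ r K (φ.eval t₁)
      = Lop t₀ t₁ r K 1) :
    Real.sqrt (∫ t in t₀..t₁, (φ.eval t) ^ 2)
      ≤ Upsilon r ((t₁ - t₀) * lam) * Real.sqrt (t₁ - t₀) := by
  have := sub_pos.2 ht
  rw [Upsilon, ← Real.sqrt_mul (by positivity)]
  refine Real.sqrt_le_sqrt ?_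
  calc ∫ t in t₀..t₁, (φ.eval t) ^ 2
      = polyInner t₀ t₁ φ φ := by simp only [polyInner_apply, sq]
    _ ≤ 2 / (2 * (2 * (r : ℝ) + 1) + (t₁ - t₀) * lam) * (t₁ - t₀) :=
        (hK.isDualSolution hφdeg hφ).inner_self_le hK ht hlam
    _ ≤ 3 / (2 * (2 * (r : ℝ) + 1) + (t₁ - t₀) * lam) * (t₁ - t₀) := by gcongr; norm_num
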